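/- Let X be a real Banach space and let C, D ⊆ X be nonempty convex sets such that C is compact and D is simultaneously approximatively weakly compact. Then C + D is simultaneously approximatively weakly compact. -/

import Mathlib

/-!
Write a minimizing sequence for `A` in `C + D` as `c n + d n` and pass to a subsequence along which
`c n → c ∈ C`. Since `simSup A` is 1-Lipschitz, `simSup A (c + d n)` has the same limit
`simDist A (C + D)`. Translating, `d n` is a sequence in `D` with
`simSup (A - c) (d n) → simDist A (C + D)`; as `c + D ⊆ C + D`, this limit is at most
`simDist (A - c) D`, hence equal to it. So `d n` is minimizing in `D` for `A - c` and
has a weakly convergent subsequence, along which `c n + d n` converges weakly too.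
-/

open Filter Topology Pointwise

variable {X : Type*} [NormedAddCommGroup X] [NormedSpace ℝ X]

/-- `simSup A y = sup_{a ∈ A} ‖a - y‖`. -/
noncomputable def simSup (A : Set X) (y : X) : ℝ := ⨆ a : A, ‖(a : X) - y‖

/-- `simDist A C = inf_{y ∈ C} sup_{a ∈ A} ‖a - y‖`. -/
noncomputable def simDist (A C : Set X) : ℝ := ⨅ y : C, simSup A (y : X)

/-- The set of best simultaneous approximations `P_C(A)`. -/
def simBest (A C : Set X) : Set X := {y | y ∈ C ∧ simSup A y = simDist A C}

/-- The set `P_C(A, δ)`. -/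
def simBestApprox (A C : Set X) (δ : ℝ) : Set X :=
  {y | y ∈ C ∧ simSup A y < simDist A C + δ}

/-- `C` is simultaneously proximinal. -/
def SimProximinal (C : Set X) : Prop :=
  ∀ A : Set X, A.Nonempty → Bornology.IsBounded A → (simBest A C).Nonempty

/-- `y` is a minimizing sequence in `C` for `A`. -/
def IsMinimizing (A C : Set X) (y : ℕ → X) : Prop :=
  (∀ n, y n ∈ C) ∧ Tendsto (fun n => simSup A (y n)) atTop (𝓝 (simDist A C))

/-- Weak convergence of a sequence. -/
def WeakTendsto (y : ℕ → X) (c : X) : Prop :=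
  ∀ f : X →L[ℝ] ℝ, Tendsto (fun n => f (y n)) atTop (𝓝 (f c))

/-- `C` is simultaneously approximatively compact. -/
def SimApproxCompact (C : Set X) : Prop :=
  ∀ A : Set X, A.Nonempty → Bornology.IsBounded A → ∀ y : ℕ → X, IsMinimizing A C y →
    ∃ c ∈ C, ∃ φ : ℕ → ℕ, StrictMono φ ∧ Tendsto (y ∘ φ) atTop (𝓝 c)

/-- `C` is simultaneously approximatively weakly compact. -/
def SimApproxWeakCompact (C : Set X) : Prop :=
  ∀ A : Set X, A.Nonempty → Bornology.IsBounded A → ∀ y : ℕ → X, IsMinimizing A C y →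
    ∃ c ∈ C, ∃ φ : ℕ → ℕ, StrictMono φ ∧ WeakTendsto (y ∘ φ) c

/-- `C` is simultaneously strongly proximinal. -/
def SimStronglyProximinal (C : Set X) : Prop :=
  SimProximinal C ∧ ∀ A : Set X, A.Nonempty → Bornology.IsBounded A → ∀ ε > (0 : ℝ),
    ∃ δ > (0 : ℝ), simBestApprox A C δ ⊆ simBest A C + Metric.closedBall (0 : X) ε

/-- `C` is simultaneously weakly strongly proximinal. -/
def SimWeakStronglyProximinal (C : Set X) : Prop :=
  SimProximinal C ∧ ∀ A : Set X, A.Nonempty → Bornology.IsBounded A →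
    ∀ V : Set X, V ∈ 𝓝 (0 : WeakSpace ℝ X) → ∃ δ > (0 : ℝ),
      simBestApprox A C δ ⊆ simBest A C + V

lemma bddAbove_norm_sub {A : Set X} (hb : Bornology.IsBounded A) (y : X) :
    BddAbove (Set.range fun a : A => ‖(a : X) - y‖) := by
  obtain ⟨R, hR⟩ := hb.exists_norm_le
  refine ⟨R + ‖y‖, ?_⟩
  rintro _ ⟨a, rfl⟩
  exact (norm_sub_le _ _).trans (by linarith [hR a a.2])

lemma simSup_nonneg (A : Set X) (y : X) : 0 ≤ simSup A y :=
  Real.iSup_nonneg fun _ => norm_nonneg _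

lemma simDist_le {A C : Set X} {y : X} (hy : y ∈ C) : simDist A C ≤ simSup A y :=
  ciInf_le (f := fun y : C => simSup A (y : X))
    ⟨0, by rintro _ ⟨z, rfl⟩; exact simSup_nonneg A z⟩ ⟨y, hy⟩

lemma simSup_le_add {A : Set X} (hA : A.Nonempty) (hb : Bornology.IsBounded A) (y z : X) :
    simSup A y ≤ simSup A z + ‖y - z‖ := by
  have : Nonempty A := hA.to_subtype
  refine ciSup_le fun a => ?_
  have h1 : ‖(a : X) - z‖ ≤ simSup A z := le_ciSup (bddAbove_norm_sub hb z) a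
  have h2 := norm_sub_le_norm_sub_add_norm_sub (a : X) z y
  rw [norm_sub_rev z y] at h2
  linarith

lemma abs_simSup_sub_le {A : Set X} (hA : A.Nonempty) (hb : Bornology.IsBounded A) (y z : X) :
    |simSup A y - simSup A z| ≤ ‖y - z‖ := by
  have h1 := simSup_le_add hA hb y z
  have h2 := simSup_le_add hA hb z y
  rw [norm_sub_rev z y] at h2
  exact abs_le.2 ⟨by linarith, by linarith⟩

lemma simSup_image_sub (A : Set X) (c d : X) :
    simSup ((fun a => a - c) '' A) d = simSup A (c + d) := by
  unfold simSup
  rw [← sSup_image' (s := (fun a => a - c) '' A) (f := fun a => ‖a - d‖),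
    ← sSup_image' (s := A) (f := fun a => ‖a - (c + d)‖), Set.image_image]
  simp only [sub_sub]

/-- The sum of a compact convex set and a simultaneously approximatively weakly compact convex
set is simultaneously approximatively weakly compact. -/
theorem compact_add_simApproxWeakCompact [CompleteSpace X]
    (C D : Set X) (hCne : C.Nonempty) (hDne : D.Nonempty)
    (hCc : Convex ℝ C) (hDc : Convex ℝ D)
    (hC : IsCompact C) (hD : SimApproxWeakCompact D) :
    SimApproxWeakCompact (C + D) := by
  intro A hA hb y ⟨hy, hlim⟩
  choose c hc d hd hcd using fun n => Set.mem_add.1 (hy n)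
  obtain ⟨c₀, hc₀, φ, hφ, hcφ⟩ := hC.tendsto_subseq hc
  have hb' : Bornology.IsBounded ((fun a => a - c₀) '' A) :=
    (LipschitzWith.id.sub (LipschitzWith.const c₀)).isBounded_image hb
  have hsup : Tendsto (fun n => simSup A (c₀ + d (φ n))) atTop (𝓝 (simDist A (C + D))) := by
    have h0 : Tendsto (fun n => simSup A (c₀ + d (φ n)) - simSup A (y (φ n))) atTop (𝓝 0) := by
      refine squeeze_zero_norm (a := fun n => ‖c (φ n) - c₀‖) (fun n => ?_)
        (tendsto_iff_norm_sub_tendsto_zero.1 hcφ)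
      have h := abs_simSup_sub_le hA hb (c₀ + d (φ n)) (y (φ n))
      rwa [← hcd, add_sub_add_right_eq_sub, norm_sub_rev, hcd] at h
    simpa using h0.add (hlim.comp hφ.tendsto_atTop)
  have hdist : simDist ((fun a => a - c₀) '' A) D = simDist A (C + D) := by
    apply le_antisymm
    · refine ge_of_tendsto' hsup fun n => ?_
      rw [← simSup_image_sub]
      exact simDist_le (hd _)
    · have : Nonempty D := hDne.to_subtype
      refine le_ciInf fun z => ?_
      rw [simSup_image_sub]
      exact simDist_le (Set.add_mem_add hc₀ z.2)
  obtain ⟨d₀, hd₀, ψ, hψ, hw⟩ := hD _ (hA.image _) hb' (d ∘ φ)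
    ⟨fun n => hd _, by simpa only [hdist, simSup_image_sub, Function.comp_apply] using hsup⟩
  refine ⟨c₀ + d₀, Set.add_mem_add hc₀ hd₀, φ ∘ ψ, hφ.comp hψ, fun f => ?_⟩
  have h1 := ((f.continuous.tendsto c₀).comp hcφ).comp hψ.tendsto_atTop
  have h2 := h1.add (hw f)
  rw [← map_add] at h2
  refine h2.congr fun n => ?_
  simp [← hcd]
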